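/- The algebra E_0(P_n) of linear operators on P_n generated by all V_{x,y} (x,y ∈ P_n), where uV_{x,y} = (xu)y, is isomorphic to the full matrix algebra M_n(F). -/

import Mathlib

inductive PBasis (n : ℕ) : Type
  | a : Fin n → Fin n → PBasis n
  | b : Fin n → Fin n → PBasis n
  | c : Fin n → PBasis n
  | d : Fin n → Fin n → PBasis n
  | e : Fin n → Fin n → PBasis n
  deriving DecidableEq

abbrev Pn (F : Type*) [Field F] (n : ℕ) : Type _ := PBasis n →₀ F

open PBasis in
noncomputable def mulB (F : Type*) [Field F] {n : ℕ} : PBasis n → PBasis n → Pn F n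
  | a i j, c k => if k = i then Finsupp.single (d i j) 1 else 0
  | b i j, c k => if k = i then Finsupp.single (e i j) 1 else 0
  | a i j, e k l => if i = k ∧ j = l then Finsupp.single (c j) 1 else 0
  | e k l, a i j => if i = k ∧ j = l then Finsupp.single (c j) 1 else 0
  | b i j, d k l => if i = k ∧ j = l then -Finsupp.single (c j) 1 else 0
  | d k l, b i j => if i = k ∧ j = l then -Finsupp.single (c j) 1 else 0
  | _, _ => 0

noncomputable def mulLin (F : Type*) [Field F] {n : ℕ} :
    Pn F n →ₗ[F] Pn F n →ₗ[F] Pn F n :=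
  Finsupp.lift (Pn F n →ₗ[F] Pn F n) F (PBasis n)
    (fun u => Finsupp.lift (Pn F n) F (PBasis n) (fun v => mulB F u v))

noncomputable instance (F : Type*) [Field F] (n : ℕ) : Mul (Pn F n) :=
  ⟨fun x y => mulLin F x y⟩

noncomputable def Vop (F : Type*) [Field F] {n : ℕ} (x y : Pn F n) :
    Module.End F (Pn F n) :=
  ((mulLin F).flip y).comp (mulLin F x)

namespace PBasis

/-- The inclusion of `F^n` into `Pn F n` as the span of the `c i`. -/
noncomputable def inclC (F : Type*) [Field F] (n : ℕ) : (Fin n → F) →ₗ[F] Pn F n :=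
  Fintype.linearCombination F (fun i => Finsupp.single (c i) (1 : F))

/-- The projection of `Pn F n` onto its `c`-coordinates. -/
noncomputable def projC (F : Type*) [Field F] (n : ℕ) : Pn F n →ₗ[F] (Fin n → F) :=
  LinearMap.pi (fun i => Finsupp.lapply (c i))

theorem inclC_single (F : Type*) [Field F] {n : ℕ} (i : Fin n) (r : F) :
    inclC F n (Pi.single i r) = Finsupp.single (c i) r := by
  simp [inclC, Fintype.linearCombination_apply_single]

theorem projC_single_c (F : Type*) [Field F] {n : ℕ} (i : Fin n) (r : F) :
    projC F n (Finsupp.single (c i) r) = Pi.single i r := by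
  ext j
  simp [projC, Finsupp.single_apply, Pi.single_apply, eq_comm]

theorem projC_single_of_ne (F : Type*) [Field F] {n : ℕ} {u : PBasis n} (h : ∀ i, u ≠ c i)
    (r : F) : projC F n (Finsupp.single u r) = 0 := by
  ext j
  simp [projC, h]

theorem projC_comp_inclC (F : Type*) [Field F] (n : ℕ) :
    projC F n ∘ₗ inclC F n = LinearMap.id := by
  refine LinearMap.pi_ext fun i r => ?_
  simp [inclC_single, projC_single_c]

theorem projC_inclC (F : Type*) [Field F] {n : ℕ} (v : Fin n → F) :
    projC F n (inclC F n v) = v :=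
  LinearMap.congr_fun (projC_comp_inclC F n) v

/-- Matrices acting on `Pn F n` through the span of the `c i`, killing the other basis vectors. -/
noncomputable def matrixAct (F : Type*) [Field F] (n : ℕ) :
    Matrix (Fin n) (Fin n) F →ₙₐ[F] Module.End F (Pn F n) where
  toFun M := inclC F n ∘ₗ Matrix.toLin' M ∘ₗ projC F n
  map_smul' r M := by ext1; simp [LinearMap.smul_comp, LinearMap.comp_smul]
  map_zero' := by simp
  map_add' M N := by simp [LinearMap.add_comp, LinearMap.comp_add]
  map_mul' M N := by
    refine LinearMap.ext fun x => ?_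
    simp [projC_inclC]

theorem matrixAct_apply (F : Type*) [Field F] {n : ℕ} (M : Matrix (Fin n) (Fin n) F)
    (x : Pn F n) : matrixAct F n M x = inclC F n (M.mulVec (projC F n x)) := rfl

theorem matrixAct_injective (F : Type*) [Field F] (n : ℕ) :
    Function.Injective (matrixAct F n) := by
  intro M N h
  refine Matrix.toLin'.injective (LinearMap.ext fun v => ?_)
  have := congrArg (projC F n) (LinearMap.congr_fun h (inclC F n v))
  simpa [matrixAct_apply, projC_inclC] using this

/-- The matrix through which `Vop` of two basis vectors acts. -/
def basisMatrix (F : Type*) [Field F] {n : ℕ} : PBasis n → PBasis n → Matrix (Fin n) (Fin n) F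
  | b i j, a k l => if k = i ∧ l = j then Matrix.single j i 1 else 0
  | a i j, b k l => if k = i ∧ l = j then -Matrix.single j i 1 else 0
  | _, _ => 0

theorem mulLin_single (F : Type*) [Field F] {n : ℕ} (u v : PBasis n) (r s : F) :
    mulLin F (Finsupp.single u r) (Finsupp.single v s) = r • s • mulB F u v := by
  simp [mulLin]

theorem single_mulVec_single_one (F : Type*) [Field F] {n : ℕ} (i j k : Fin n) :
    (Matrix.single j i (1 : F)).mulVec (Pi.single k 1) = if k = i then Pi.single j 1 else 0 := by
  ext l
  by_cases h : k = i
  · simp [Matrix.single_apply, Pi.single_apply, h, eq_comm]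
  · simp [Ne.symm h, h]

theorem Vop_single_one (F : Type*) [Field F] {n : ℕ} (u v : PBasis n) :
    Vop F (Finsupp.single u 1) (Finsupp.single v 1) = matrixAct F n (basisMatrix F u v) := by
  refine Finsupp.lhom_ext' fun w => LinearMap.ext_ring ?_
  rw [LinearMap.comp_apply, LinearMap.comp_apply, Finsupp.lsingle_apply, matrixAct_apply]
  simp only [Vop, LinearMap.comp_apply, LinearMap.flip_apply, mulLin_single, one_smul]
  cases w with
  | c k =>
    rw [projC_single_c]
    cases u <;> cases v <;>
      simp only [mulB, basisMatrix] <;> (try split_ifs) <;>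
      simp [mulLin_single, mulB, Matrix.neg_mulVec, single_mulVec_single_one, inclC_single,
        -Matrix.mulVec_single, *]
  | _ =>
    rw [projC_single_of_ne F (by simp)]
    cases u <;> simp only [mulB] <;> (try split_ifs) <;> simp [mulLin_single, mulB]

theorem Vop_mem_range (F : Type*) [Field F] {n : ℕ} (x y : Pn F n) :
    Vop F x y ∈ NonUnitalAlgHom.range (matrixAct F n) := by
  have add_left (x x' y : Pn F n) : Vop F (x + x') y = Vop F x y + Vop F x' y := by
    simp [Vop, LinearMap.comp_add]
  have add_right (x y y' : Pn F n) : Vop F x (y + y') = Vop F x y + Vop F x y' := by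
    simp [Vop, LinearMap.add_comp]
  have smul_smul (r s : F) (x y : Pn F n) : Vop F (r • x) (s • y) = r • s • Vop F x y := by
    simp [Vop, LinearMap.smul_comp, LinearMap.comp_smul]
  induction x using Finsupp.induction_linear with
  | zero => simp [Vop, zero_mem]
  | add x x' hx hx' => exact add_left x x' y ▸ add_mem hx hx'
  | single u r =>
    induction y using Finsupp.induction_linear with
    | zero => simp [Vop, zero_mem]
    | add y y' hy hy' => exact add_right _ y y' ▸ add_mem hy hy'
    | single v s =>
      rw [← Finsupp.smul_single_one u r, ← Finsupp.smul_single_one v s, smul_smul,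
        Vop_single_one]
      exact SMulMemClass.smul_mem _ (SMulMemClass.smul_mem _ ⟨_, rfl⟩)

theorem adjoin_Vop_eq_range (F : Type*) [Field F] (n : ℕ) :
    NonUnitalAlgebra.adjoin F {w : Module.End F (Pn F n) | ∃ x y : Pn F n, w = Vop F x y} =
      NonUnitalAlgHom.range (matrixAct F n) := by
  apply le_antisymm
  · refine NonUnitalAlgebra.adjoin_le ?_
    rintro _ ⟨x, y, rfl⟩
    exact Vop_mem_range F x y
  · rintro _ ⟨M, rfl⟩
    change matrixAct F n M ∈ _
    rw [Matrix.matrix_eq_sum_single M, map_sum]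
    refine sum_mem fun j _ => ?_
    rw [map_sum]
    refine sum_mem fun i _ => ?_
    have h : Matrix.single j i (M j i) = M j i • basisMatrix F (b i j) (a i j) := by
      simp [basisMatrix]
    rw [h, map_smul, ← Vop_single_one]
    exact SMulMemClass.smul_mem _ (NonUnitalAlgebra.subset_adjoin F ⟨_, _, rfl⟩)

end PBasis

theorem stmt (F : Type*) [Field F] (n : ℕ) :
    ∃ f : (NonUnitalAlgebra.adjoin F
        {w : Module.End F (Pn F n) | ∃ x y : Pn F n, w = Vop F x y})
        →ₙₐ[F] Matrix (Fin n) (Fin n) F,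
      Function.Bijective f := by
  rw [PBasis.adjoin_Vop_eq_range]
  let g := NonUnitalAlgHom.codRestrict (PBasis.matrixAct F n)
    (NonUnitalAlgHom.range (PBasis.matrixAct F n)) fun M => ⟨M, rfl⟩
  have hg : Function.Bijective g := by
    refine ⟨fun M N h => PBasis.matrixAct_injective F n (congrArg Subtype.val h), ?_⟩
    rintro ⟨_, M, rfl⟩
    exact ⟨M, rfl⟩
  let e := Equiv.ofBijective g hg
  exact ⟨g.inverse e.symm e.left_inv e.right_inv, e.symm.bijective⟩
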